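/- arXiv:2510.02704 — 2 statements merged into one kernel-verified Lean document; each statement's English description precedes it below -/
import Mathlib

section
/- Let M be a nonempty compact connected Hausdorff topological 3-manifold without boundary (a charted space modeled on ℝ³) and let φ be a continuous flow on M. Suppose l₁, …, l_m ⊆ M are pairwise disjoint orbits of periodic non-fixed points of φ (so each l_i is a φ-invariant subset homeomorphic to the circle). Suppose Λ₁, …, Λ_q (with q ≥ 1) are nonempty, closed, φ-invariant, pairwise disjoint subsets of M, each disjoint from every l_i, such that (i) every point x ∈ M not lying on any l_i has its ω-limit set ω(x) contained in some Λ_j, and (ii) for each j the basin B_j = { x ∈ M : ω(x) ⊆ Λ_j } is an open subset of M. Then q = 1, i.e., there is only one set Λ_j. -/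
/-!
Write `B j` for the basin of `Λ j`. The basins are open, invariant and pairwise disjoint, and their
complement is exactly `L = ⋃ i, l i`. If there were two attractors, `U = B 0` and
`W = ⋃ j ≠ 0, B j` would be disjoint nonempty open invariant sets with complement `L`. It suffices
to see that every `p ∈ L` lies in the closure of exactly one of `U` and `W`: then `closure U` is
clopen, contradicting connectedness of `M`.

Near `p` the set `L` is the single arc `{φ s p : |s| ≤ ε}` (`exists_local_arc`), and Tietze's theorem
gives a continuous `u : M → ℝ` with `u (φ s p) = s` on this arc (`exists_time_function`). Fix an open
ball `D` around `p`, parametrized by `ℝ³` with `0` at `p`.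

* If `p` were in neither closure, `D` could be chosen inside the arc. Then `u` would have no zero on
  the connected set `D \ {p}`, yet take both signs there (`mem_closure_union_of_local_arc`).
* Suppose `p` is in both closures. Let `d` be the distance to `L` in the ball, taken with sign `+` on
  `U` and `-` on `W`. Then `F = u + i d` vanishes only at `p`. As `ℝ³ \ {0}` is simply connected, `F`
  has a continuous logarithm `G` on `D \ {p}` (`exists_log_compl_zero`). On the other hand
  `φ δ p` and `φ (-δ) p` are joined inside `D \ {p}` by a connected set contained in `U ∪ L`: push a
  small connected set by the times `±δ`, and join the two copies along a flow line through `U`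
  (`exists_side_connection`). There `F` stays in the closed upper half plane, and so
  `Im G` increases by `π` from `φ δ p` to `φ (-δ) p` (`half_turn`). Doing the same through `W`, where
  `F` is in the lower half plane, shows that `Im G` decreases by `π`, a contradiction
  (`not_mem_both_closures`).

This replaces the fact that a set of codimension two does not separate a manifold; no tameness of
the orbits and no local cross-section of the flow is needed.
-/

open Set Filter

/-! ### Continuous logarithms on `ℝ³ \ {0}` -/

/-- Two continuous logarithms of the same function on a connected set differ by a constant; here
`h` is their difference. -/
theorem exp_one_constant {X : Type*} [TopologicalSpace X] {C : Set X} (hC : IsPreconnected C)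
    {h : X → ℂ} (hc : ContinuousOn h C) (he : ∀ x ∈ C, Complex.exp (h x) = 1)
    {a b : X} (ha : a ∈ C) (hb : b ∈ C) : h a = h b := by
  have : DiscreteTopology (Complex.exp ⁻¹' {1}) := (Complex.isCoveringMapOn_exp 1 (by simp)).1
  obtain ⟨y, -, hy⟩ := hC.eqOn_const_of_mapsTo (T := Complex.exp ⁻¹' {1}) ⟨this⟩ hc
    (fun x hx => he x hx) ⟨0, by simp⟩
  exact (hy ha).trans (hy hb).symm

/-- Let `G` be a continuous logarithm of `v + i d` on a connected set where the values lie in the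
closed upper half plane. Then `Im G` increases by `π` from a point with positive real value to a
point with negative real value, because there `G` differs by a constant from the branch of the
logarithm that is cut along the negative imaginary axis. -/
theorem half_turn {X : Type*} [TopologicalSpace X] {C : Set X} (hC : IsPreconnected C)
    {G : X → ℂ} (hG : ContinuousOn G C) {v d : X → ℝ}
    (he : ∀ x ∈ C, Complex.exp (G x) = ⟨v x, d x⟩) (hd : ∀ x ∈ C, 0 ≤ d x)
    {a b : X} (ha : a ∈ C) (hb : b ∈ C) (hda : d a = 0) (hdb : d b = 0)
    (hva : 0 < v a) (hvb : v b < 0) : (G b).im - (G a).im = Real.pi := by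
  -- After multiplication by `-i`, the punctured closed upper half plane lies in the domain of the
  -- principal branch.
  have hs : ∀ x ∈ C, -Complex.I * Complex.exp (G x) ∈ Complex.slitPlane := by
    intro x hx
    have hne := Complex.exp_ne_zero (G x)
    rw [he x hx] at hne ⊢
    rw [Complex.mem_slitPlane_iff]
    simp only [Complex.mul_re, Complex.mul_im, Complex.neg_re, Complex.neg_im, Complex.I_re,
      Complex.I_im]
    rcases (hd x hx).lt_or_eq with h | h
    · left; simpa using h
    · right
      intro h2
      apply hne
      apply Complex.ext
      · simpa using h2
      · exact h.symm
  have key := exp_one_constant hC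
    (h := fun x => G x - (Complex.log (-Complex.I * Complex.exp (G x)) + Real.pi / 2 * Complex.I))
    (hG.sub (ContinuousOn.add ((continuousOn_const.mul hG.cexp).clog hs) continuousOn_const))
    (fun x hx => by
      rw [Complex.exp_sub, Complex.exp_add, Complex.exp_log (Complex.slitPlane_ne_zero (hs x hx)),
        Complex.exp_pi_div_two_mul_I, div_eq_one_iff_eq]
      · linear_combination (Complex.exp (G x)) * Complex.I_sq
      · simp) ha hb
  have h1 : (-Complex.I * Complex.exp (G a)) = ((v a : ℝ) : ℂ) * (-Complex.I) := by
    rw [he a ha, hda]; apply Complex.ext <;> simp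
  have h2 : (-Complex.I * Complex.exp (G b)) = ((-v b : ℝ) : ℂ) * Complex.I := by
    rw [he b hb, hdb]; apply Complex.ext <;> simp
  have key' := congrArg Complex.im key
  simp only [h1, h2, Complex.sub_im, Complex.add_im, Complex.log_im,
    Complex.arg_real_mul _ hva, Complex.arg_real_mul _ (neg_pos.2 hvb),
    Complex.arg_I, Complex.arg_neg_I] at key'
  linarith

theorem isOpen_ray_compl :
    IsOpen ({z | z 0 = 0 ∧ z 1 = 0 ∧ 0 ≤ z 2}ᶜ : Set (EuclideanSpace ℝ (Fin 3))) := by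
  have hc : ∀ i : Fin 3, Continuous fun z : EuclideanSpace ℝ (Fin 3) => z i :=
    fun i => by fun_prop
  rw [isOpen_compl_iff]
  exact (isClosed_eq (hc 0) continuous_const).inter
    ((isClosed_eq (hc 1) continuous_const).inter (isClosed_le continuous_const (hc 2)))

/-- The complement of a closed ray issuing from `0` is star-shaped, hence simply connected, so that
continuous logarithms exist on it. -/
theorem exists_log_compl_ray {F : EuclideanSpace ℝ (Fin 3) → ℂ} (hF : Continuous F)
    (h0 : ∀ z, z ≠ 0 → F z ≠ 0) :
    ∃ G : EuclideanSpace ℝ (Fin 3) → ℂ, ContinuousOn G {z | z 0 = 0 ∧ z 1 = 0 ∧ 0 ≤ z 2}ᶜ ∧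
      ∀ z ∈ ({z | z 0 = 0 ∧ z 1 = 0 ∧ 0 ≤ z 2}ᶜ : Set (EuclideanSpace ℝ (Fin 3))),
        Complex.exp (G z) = F z := by
  set S : Set (EuclideanSpace ℝ (Fin 3)) := {z | z 0 = 0 ∧ z 1 = 0 ∧ 0 ≤ z 2}ᶜ with hS
  have ho : IsOpen S := isOpen_ray_compl
  have hmem : !₂[(0 : ℝ), 0, -1] ∈ S := by simp [hS]
  have hstar : StarConvex ℝ !₂[(0 : ℝ), 0, -1] S := by
    intro z hz s t hs ht hst hcon
    apply hz
    obtain ⟨h1, h2, h3⟩ := hcon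
    simp only [PiLp.add_apply, PiLp.smul_apply, smul_eq_mul] at h1 h2 h3
    simp at h1 h2 h3
    have ht0 : 0 < t := by
      rcases ht.lt_or_eq with h | h
      · exact h
      · subst h; linarith
    refine ⟨h1.resolve_left ht0.ne', h2.resolve_left ht0.ne', ?_⟩
    by_contra hneg
    nlinarith
  have hsc : IsSimplyConnected S := by
    have := hstar.contractibleSpace ⟨_, hmem⟩
    exact SimplyConnectedSpace.ofContractible S
  obtain ⟨G, hG, hGe⟩ := Complex.exists_continuousOn_eqOn_exp_comp hsc ho hF.continuousOn (by
    rintro ⟨z, hz, hz0⟩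
    refine h0 z ?_ hz0
    rintro rfl
    exact hz (by simp))
  exact ⟨G, hG, hGe⟩

/-- The complement of a line in `ℝ³` is connected. This depends on the dimension: the complement of
a line in the plane is disconnected, and `exists_log_compl_zero` fails there. -/
theorem axis_compl_preconnected :
    IsPreconnected ({z | z 0 = 0 ∧ z 1 = 0}ᶜ : Set (EuclideanSpace ℝ (Fin 3))) := by
  let f : EuclideanSpace ℝ (Fin 3) →ₗ[ℝ] ℝ × ℝ :=
    { toFun := fun z => (z 0, z 1)
      map_add' := fun _ _ => rfl
      map_smul' := fun _ _ => rfl }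
  have hf : Function.Surjective f := fun p => ⟨!₂[p.1, p.2, 0], rfl⟩
  have : 1 < Module.rank ℝ (EuclideanSpace ℝ (Fin 3) ⧸ LinearMap.ker f) := by
    rw [(f.quotKerEquivOfSurjective hf).rank_eq]
    simp
    norm_num
  have h := (isConnected_compl_of_one_lt_codim this).isPreconnected
  convert h using 2
  ext z
  exact (Prod.mk_eq_zero (x := z 0) (y := z 1)).symm

/-- A continuous function on `ℝ³` vanishing at most at `0` has a continuous logarithm on `ℝ³ \ {0}`.
Cover `ℝ³ \ {0}` by the complements of two opposite rays; the logarithms on these differ by a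
constant on the intersection, which is the complement of a line, and can therefore be glued. -/
theorem exists_log_compl_zero {F : EuclideanSpace ℝ (Fin 3) → ℂ} (hF : Continuous F)
    (h0 : ∀ z, z ≠ 0 → F z ≠ 0) :
    ∃ G : EuclideanSpace ℝ (Fin 3) → ℂ, ContinuousOn G {0}ᶜ ∧
      ∀ z, z ≠ 0 → Complex.exp (G z) = F z := by
  obtain ⟨G₁, hG₁, he₁⟩ := exists_log_compl_ray hF h0
  obtain ⟨G₂', hG₂', he₂'⟩ := exists_log_compl_ray (F := fun z => F (-z)) (by fun_prop)
    (fun z hz => h0 _ (neg_ne_zero.2 hz))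
  set S : Set (EuclideanSpace ℝ (Fin 3)) := {z | z 0 = 0 ∧ z 1 = 0 ∧ 0 ≤ z 2}ᶜ with hS
  have ho : IsOpen S := isOpen_ray_compl
  set T : Set (EuclideanSpace ℝ (Fin 3)) := (fun z => -z) ⁻¹' S with hT
  have hoT : IsOpen T := ho.preimage continuous_neg
  set G₂ : EuclideanSpace ℝ (Fin 3) → ℂ := fun z => G₂' (-z) with hG₂def
  have hG₂ : ContinuousOn G₂ T := hG₂'.comp continuous_neg.continuousOn (fun z hz => hz)
  have he₂ : ∀ z ∈ T, Complex.exp (G₂ z) = F z := fun z hz => by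
    simpa [hG₂def] using he₂' (-z) hz
  have hST : S ∩ T = {z | z 0 = 0 ∧ z 1 = 0}ᶜ := by
    ext z
    simp only [hS, hT, mem_inter_iff, mem_preimage, mem_compl_iff, mem_ofPred_eq, PiLp.neg_apply,
      neg_eq_zero, Left.nonneg_neg_iff]
    have := le_total (z 2) 0
    tauto
  have hcov : ∀ z, z ≠ 0 → z ∈ S ∨ z ∈ T := by
    intro z hz
    by_contra! hcon
    simp only [hS, hT, mem_preimage, mem_compl_iff, mem_ofPred_eq, PiLp.neg_apply, not_not,
      neg_eq_zero, Left.nonneg_neg_iff] at hcon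
    apply hz
    ext i
    fin_cases i
    · exact hcon.1.1
    · exact hcon.1.2.1
    · exact le_antisymm hcon.2.2.2 hcon.1.2.2
  let w : EuclideanSpace ℝ (Fin 3) := !₂[1, 0, 0]
  have hw : w ∈ S ∩ T := by rw [hST]; simp [w]
  have hcon : ∀ z ∈ S ∩ T, G₁ z = G₂ z + (G₁ w - G₂ w) := by
    intro z hz
    have := exp_one_constant (hST ▸ axis_compl_preconnected) (h := fun z => G₁ z - G₂ z)
      ((hG₁.mono inter_subset_left).sub (hG₂.mono inter_subset_right))
      (fun x hx => by
        rw [Complex.exp_sub, he₁ x hx.1, he₂ x hx.2, div_self]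
        rw [← he₁ x hx.1]; exact Complex.exp_ne_zero _) hz hw
    linear_combination this
  classical
  set G : EuclideanSpace ℝ (Fin 3) → ℂ := fun z => if z ∈ S then G₁ z else G₂ z + (G₁ w - G₂ w)
    with hGdef
  have hGS : ∀ z ∈ S, G z = G₁ z := fun z hz => by simp [hGdef, hz]
  have hGT : ∀ z ∈ T, G z = G₂ z + (G₁ w - G₂ w) := fun z hz => by
    by_cases h : z ∈ S
    · rw [hGS z h, hcon z ⟨h, hz⟩]
    · simp [hGdef, h]
  have hcS : ContinuousOn G S := hG₁.congr hGS
  have hcT : ContinuousOn G T := (hG₂.add continuousOn_const).congr hGT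
  refine ⟨G, ?_, ?_⟩
  · intro z hz
    rcases hcov z hz with h | h
    · exact (hcS.continuousAt (ho.mem_nhds h)).continuousWithinAt
    · exact (hcT.continuousAt (hoT.mem_nhds h)).continuousWithinAt
  · intro z hz
    rcases hcov z hz with h | h
    · rw [hGS z h, he₁ z h]
    · have : Complex.exp (G₁ w - G₂ w) = 1 := by
        rw [Complex.exp_sub, he₁ w hw.1, he₂ w hw.2, div_self]
        rw [← he₁ w hw.1]; exact Complex.exp_ne_zero _
      rw [hGT z h, Complex.exp_add, he₂ z h, this, mul_one]

/-! ### A connectedness lemma -/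

/-- If removing a connected set `K` from a connected set `N` leaves the union of two separated parts,
then `K` together with either part is connected. -/
theorem preconnected_union_side {X : Type*} [TopologicalSpace X] {N K U W : Set X}
    (hN : IsPreconnected N) (hK : IsPreconnected K) (hKne : K.Nonempty) (hKN : K ⊆ N)
    (hU : IsOpen U) (hW : IsOpen W)
    (hUW : Disjoint U W) (hcov : N ⊆ K ∪ (U ∪ W)) (hKU : Disjoint K U) :
    IsPreconnected (K ∪ (N ∩ U)) := by
  have aux : ∀ O₁ O₂ : Set X, IsOpen O₁ → IsOpen O₂ → K ∪ (N ∩ U) ⊆ O₁ ∪ O₂ →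
      (K ∪ (N ∩ U)) ∩ (O₁ ∩ O₂) = ∅ → K ⊆ O₁ → K ∪ (N ∩ U) ⊆ O₁ := by
    intro O₁ O₂ h₁ h₂ hc hd hKO
    have := isPreconnected_iff_subset_of_disjoint.1 hN (O₁ ∪ W) (O₂ ∩ U) (h₁.union hW)
      (h₂.inter hU) (by
        intro x hx
        rcases hcov hx with h | h | h
        · exact Or.inl (Or.inl (hKO h))
        · rcases hc (Or.inr ⟨hx, h⟩) with h' | h'
          · exact Or.inl (Or.inl h')
          · exact Or.inr ⟨h', h⟩
        · exact Or.inl (Or.inr h)) (by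
        rw [eq_empty_iff_forall_notMem]
        rintro x ⟨hx, h | h, h2, hxU⟩
        · exact (eq_empty_iff_forall_notMem.1 hd x) ⟨Or.inr ⟨hx, hxU⟩, h, h2⟩
        · exact disjoint_left.1 hUW hxU h)
    rcases this with h | h
    · rintro x (hx | ⟨hx, hxU⟩)
      · exact hKO hx
      · rcases h hx with h | h
        · exact h
        · exact (disjoint_left.1 hUW hxU h).elim
    · obtain ⟨x, hx⟩ := hKne
      exact (disjoint_left.1 hKU hx (h (hKN hx)).2).elim
  rw [isPreconnected_iff_subset_of_disjoint]
  intro O₁ O₂ h₁ h₂ hc hd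
  rcases isPreconnected_iff_subset_of_disjoint.1 hK O₁ O₂ h₁ h₂ (subset_union_left.trans hc) (by
    rw [← subset_empty_iff, ← hd]; exact inter_subset_inter_left _ subset_union_left) with h | h
  · exact Or.inl (aux O₁ O₂ h₁ h₂ hc hd h)
  · exact Or.inr (aux O₂ O₁ h₂ h₁ (by rwa [union_comm O₂]) (by rwa [inter_comm O₂]) h)

/-! ### Periodic orbits -/

/-- A periodic non-fixed point has a minimal period: its stabilizer is a closed proper nontrivial
subgroup of `ℝ`, hence infinite cyclic. -/
theorem exists_period {M : Type*} [TopologicalSpace M] [T2Space M] (φ : Flow ℝ M) {p : M}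
    (hper : ∃ T : ℝ, 0 < T ∧ φ T p = p) (hnf : ∃ t : ℝ, φ t p ≠ p) :
    ∃ τ : ℝ, 0 < τ ∧ φ τ p = p ∧ ∀ t, |t| < τ → φ t p = p → t = 0 := by
  let H : AddSubgroup ℝ :=
    { carrier := {t | φ t p = p}
      zero_mem' := φ.map_zero_apply p
      add_mem' := fun {a b} ha hb => by
        change φ (a + b) p = p
        rw [φ.map_add, show φ b p = p from hb, show φ a p = p from ha]
      neg_mem' := fun {a} ha => by
        change φ (-a) p = p
        conv_lhs => rw [← show φ a p = p from ha]
        rw [← φ.map_add, neg_add_cancel, φ.map_zero_apply] }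
  have hcl : IsClosed (H : Set ℝ) :=
    isClosed_eq (φ.continuous continuous_id continuous_const) continuous_const
  rcases H.dense_or_cyclic with hd | ⟨a, ha⟩
  · obtain ⟨t, ht⟩ := hnf
    have : t ∈ (H : Set ℝ) := by
      rw [← hcl.closure_eq, hd.closure_eq]; trivial
    exact (ht this).elim
  · have hmem : ∀ t, φ t p = p ↔ ∃ n : ℤ, n • a = t := fun t => by
      rw [← AddSubgroup.mem_closure_singleton, ← ha]; rfl
    have ha0 : a ≠ 0 := by
      rintro rfl
      obtain ⟨T, hT, hTp⟩ := hper
      obtain ⟨n, hn⟩ := (hmem T).1 hTp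
      simp at hn
      exact hT.ne hn
    refine ⟨|a|, abs_pos.2 ha0, ?_, ?_⟩
    · rcases abs_choice a with h | h
      · exact (hmem _).2 ⟨1, by simp [h]⟩
      · exact (hmem _).2 ⟨-1, by simp [h]⟩
    · intro t ht htp
      obtain ⟨n, rfl⟩ := (hmem t).1 htp
      rw [zsmul_eq_mul, abs_mul, mul_lt_iff_lt_one_left (abs_pos.2 ha0)] at ht
      have : n = 0 := by
        rw [← Int.abs_lt_one_iff]
        exact_mod_cast ht
      simp [this]

open Topology in
/-- Near a point `p` of a periodic orbit, the orbit is the single embedded arc `{φ s p : |s| ≤ η}`,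
since the rest of the orbit is a compact set missing `p`. -/
theorem exists_local_arc {M : Type*} [TopologicalSpace M] [T2Space M] (φ : Flow ℝ M) {p : M}
    (hper : ∃ T : ℝ, 0 < T ∧ φ T p = p) (hnf : ∃ t : ℝ, φ t p ≠ p) :
    ∃ ε : ℝ, 0 < ε ∧ InjOn (fun t => φ t p) (Icc (-ε) ε) ∧
      ∀ η, 0 < η → η ≤ ε →
        ∀ᶠ x in 𝓝 p, x ∈ range (fun t => φ t p) → ∃ s ∈ Icc (-η) η, φ s p = x := by
  obtain ⟨τ, hτ, hτp, hmin⟩ := exists_period φ hper hnf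
  have hmul : ∀ (n : ℤ) (t : ℝ), φ (t + n • τ) p = φ t p := by
    intro n t
    induction n using Int.induction_on with
    | zero => simp
    | succ k ih =>
      rw [add_zsmul, one_zsmul, ← add_assoc, φ.map_add, hτp, ih]
    | pred k ih =>
      rw [← ih, sub_zsmul, one_zsmul]
      conv_lhs => rw [← hτp]
      rw [← φ.map_add]
      congr 1
      ring
  refine ⟨τ / 4, by positivity, ?_, ?_⟩
  · intro s hs s' hs' h
    have h1 : φ (s - s') p = p := by
      rw [sub_eq_neg_add, φ.map_add, show φ s p = φ s' p from h, ← φ.map_add, neg_add_cancel,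
        φ.map_zero_apply]
    have := hmin (s - s') (by
      rw [abs_lt]; constructor <;> linarith [hs.1, hs.2, hs'.1, hs'.2]) h1
    linarith
  · intro η hη hηε
    have hK : IsClosed ((fun t => φ t p) '' Icc η (τ - η)) :=
      (isCompact_Icc.image (φ.continuous continuous_id continuous_const)).isClosed
    have hpK : p ∉ (fun t => φ t p) '' Icc η (τ - η) := by
      rintro ⟨t, ht, htp⟩
      have := hmin t (by rw [abs_lt]; constructor <;> linarith [ht.1, ht.2]) htp
      linarith [ht.1]
    filter_upwards [hK.isOpen_compl.mem_nhds hpK]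
    rintro x hx ⟨t, rfl⟩
    obtain ⟨n, hn, -⟩ := existsUnique_add_zsmul_mem_Ico hτ t (-η)
    refine ⟨t + n • τ, ⟨hn.1, ?_⟩, hmul n t⟩
    by_contra! hlt
    exact hx ⟨t + n • τ, ⟨hlt.le, by linarith [hn.2]⟩, hmul n t⟩

/-! ### Local data near a point -/

open Topology in
/-- Every neighbourhood of `p` contains an open set homeomorphic to the whole of `ℝ³`. -/
theorem exists_ball_chart {M : Type*} [TopologicalSpace M]
    [ChartedSpace (EuclideanSpace ℝ (Fin 3)) M] (p : M) {V : Set M} (hV : V ∈ 𝓝 p) :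
    ∃ e : EuclideanSpace ℝ (Fin 3) → M, IsOpenEmbedding e ∧ e 0 = p ∧ range e ⊆ V := by
  set c := chartAt (EuclideanSpace ℝ (Fin 3)) p with hc
  have hp : p ∈ c.source := mem_chart_source _ p
  have hpt : c p ∈ c.target := c.map_source hp
  have h1 : c.target ∩ c.symm ⁻¹' V ∈ 𝓝 (c p) :=
    inter_mem (c.open_target.mem_nhds hpt)
      ((c.symm.continuousAt hpt).preimage_mem_nhds (by
        rwa [c.left_inv hp]))
  obtain ⟨r, hr, hball⟩ := Metric.mem_nhds_iff.1 h1
  let b := OpenPartialHomeomorph.univBall (c p) r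
  have hbmem : ∀ z, b z ∈ Metric.ball (c p) r := fun z => by
    rw [← OpenPartialHomeomorph.univBall_target (c p) hr]
    exact b.map_source (by simp [b])
  have hsrc : (b.trans c.symm).source = univ := by
    rw [eq_univ_iff_forall]
    intro z
    rw [OpenPartialHomeomorph.trans_source]
    exact ⟨by simp [b], (hball (hbmem z)).1⟩
  refine ⟨b.trans c.symm, (b.trans c.symm).isOpenEmbedding hsrc, ?_, ?_⟩
  · simp [b, c.left_inv hp]
  · rintro _ ⟨z, rfl⟩
    exact (hball (hbmem z)).2

/-- A continuous function on `M` extending the time parameter `φ s p ↦ s` of an embedded orbit arc,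
by Tietze's theorem. -/
theorem exists_time_function {M : Type*} [TopologicalSpace M] [T2Space M] [CompactSpace M]
    (φ : Flow ℝ M) {p : M} {ε : ℝ} (hinj : InjOn (fun t => φ t p) (Icc (-ε) ε)) :
    ∃ u : C(M, ℝ), ∀ s ∈ Icc (-ε) ε, u (φ s p) = s := by
  let e : C(Icc (-ε) ε, M) :=
    ⟨fun s => φ s p, φ.continuous continuous_subtype_val continuous_const⟩
  have he : Topology.IsClosedEmbedding e := e.continuous.isClosedEmbedding fun a b hab =>
    Subtype.ext (hinj a.2 b.2 hab)
  obtain ⟨u, hu⟩ := ContinuousMap.exists_extension he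
    (⟨Subtype.val, continuous_subtype_val⟩ : C(Icc (-ε) ε, ℝ))
  exact ⟨u, fun s hs => congrArg (fun f => f ⟨s, hs⟩) hu⟩

/-- The distance to the complement of `U ∪ W`, taken with a minus sign on `W`. It is continuous since
the frontier of `U` lies in that complement. -/
theorem exists_signed_dist {E : Type*} [PseudoMetricSpace E] {U W : Set E} (hU : IsOpen U)
    (hW : IsOpen W) (hUW : Disjoint U W) (hne : (U ∪ W)ᶜ.Nonempty) :
    ∃ d : E → ℝ, Continuous d ∧ (∀ z ∈ U, 0 < d z) ∧ (∀ z ∈ W, d z < 0) ∧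
      ∀ z ∉ U ∪ W, d z = 0 := by
  classical
  have hcl : IsClosed (U ∪ W)ᶜ := (hU.union hW).isClosed_compl
  have hpos : ∀ z ∈ U ∪ W, 0 < Metric.infDist z (U ∪ W)ᶜ := fun z hz =>
    (hcl.notMem_iff_infDist_pos hne).1 (fun h => h hz)
  refine ⟨fun z => if z ∈ U then Metric.infDist z (U ∪ W)ᶜ else -Metric.infDist z (U ∪ W)ᶜ,
    ?_, ?_, ?_, ?_⟩
  · refine Continuous.if ?_ (Metric.continuous_infDist_pt _) (Metric.continuous_infDist_pt _).neg
    intro z hz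
    have hz' : z ∈ frontier U := hz
    have hzU : z ∉ U := by
      rw [hU.frontier_eq] at hz'; exact hz'.2
    have hzW : z ∉ W := fun h =>
      disjoint_left.1 (hUW.closure_left hW) (frontier_subset_closure hz') h
    rw [Metric.infDist_zero_of_mem (show z ∈ (U ∪ W)ᶜ from fun h => h.elim hzU hzW), neg_zero]
  · intro z hz
    simpa [hz] using hpos z (Or.inl hz)
  · intro z hz
    simpa [disjoint_right.1 hUW hz] using hpos z (Or.inr hz)
  · intro z hz
    have : z ∉ U := fun h => hz (Or.inl h)
    simp only [this, if_false]
    rw [Metric.infDist_zero_of_mem hz, neg_zero]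

/-! ### Orbits of the flow do not separate -/

/-- The points `φ δ p` and `φ (-δ) p` are joined by a connected set avoiding `p` and running on one
side `U`, up to points on the orbits through `A`. With `B = A ∪ (N ∩ U)`, which is connected, it
consists of the translates `φ δ B` and `φ (-δ) B` and a flow line through a point of `N ∩ U`. -/
theorem exists_side_connection {M : Type*} [TopologicalSpace M] (φ : Flow ℝ M)
    {U W N A D : Set M} {p : M} {δ : ℝ} (hδ : 0 ≤ δ)
    (hU : IsOpen U) (hW : IsOpen W) (hUW : Disjoint U W)
    (hUinv : ∀ t, ∀ x ∈ U, φ t x ∈ U) (hN : IsPreconnected N) (hA : IsPreconnected A)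
    (hAN : A ⊆ N) (hpA : p ∈ A) (hNA : N ⊆ A ∪ (U ∪ W)) (hAU : Disjoint A U)
    (hND : ∀ x ∈ N, ∀ t ∈ Icc (-δ) δ, φ t x ∈ D)
    (hp1 : ∀ x ∈ N, φ δ x ≠ p) (hp2 : ∀ x ∈ N, φ (-δ) x ≠ p) (hNU : (N ∩ U).Nonempty) :
    ∃ C : Set M, IsPreconnected C ∧ C ⊆ D ∧ p ∉ C ∧ φ δ p ∈ C ∧ φ (-δ) p ∈ C ∧
      ∀ z ∈ C, z ∈ U ∨ ∃ a ∈ A, ∃ t : ℝ, φ t a = z := by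
  obtain ⟨x, hxN, hxU⟩ := hNU
  have hB := preconnected_union_side hN hA ⟨p, hpA⟩ hAN hU hW hUW hNA hAU
  set B := A ∪ (N ∩ U)
  have hBN : B ⊆ N := union_subset hAN inter_subset_left
  have hxB : x ∈ B := Or.inr ⟨hxN, hxU⟩
  have hpB : p ∈ B := Or.inl hpA
  have hδm : δ ∈ Icc (-δ) δ := ⟨by linarith, le_rfl⟩
  have hδm' : -δ ∈ Icc (-δ) δ := ⟨le_rfl, by linarith⟩
  have hBside : ∀ t, ∀ z ∈ B, φ t z ∈ U ∨ ∃ a ∈ A, ∃ s : ℝ, φ s a = φ t z := by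
    rintro t z (h | h)
    · exact Or.inr ⟨z, h, t, rfl⟩
    · exact Or.inl (hUinv t z h.2)
  have h1 : IsPreconnected (φ δ '' B) :=
    hB.image _ (φ.continuous continuous_const continuous_id).continuousOn
  have h2 : IsPreconnected (φ (-δ) '' B) :=
    hB.image _ (φ.continuous continuous_const continuous_id).continuousOn
  have h3 : IsPreconnected ((fun t => φ t x) '' Icc (-δ) δ) :=
    isPreconnected_Icc.image _ (φ.continuous continuous_id continuous_const).continuousOn
  have h13 := h1.union (φ δ x) (mem_image_of_mem _ hxB) (mem_image_of_mem (fun t => φ t x) hδm) h3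
  have h132 := h13.union (φ (-δ) x) (Or.inr (mem_image_of_mem (fun t => φ t x) hδm'))
    (mem_image_of_mem _ hxB) h2
  refine ⟨_, h132, ?_, ?_, Or.inl (Or.inl (mem_image_of_mem _ hpB)),
    Or.inr (mem_image_of_mem _ hpB), ?_⟩
  · rintro _ ((⟨z, hz, rfl⟩ | ⟨t, ht, rfl⟩) | ⟨z, hz, rfl⟩)
    · exact hND z (hBN hz) _ hδm
    · exact hND x hxN t ht
    · exact hND z (hBN hz) _ hδm'
  · rintro ((⟨z, hz, h⟩ | ⟨t, ht, h⟩) | ⟨z, hz, h⟩)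
    · exact hp1 z (hBN hz) h
    · exact disjoint_left.1 hAU hpA (h ▸ hUinv t x hxU)
    · exact hp2 z (hBN hz) h
  · rintro _ ((⟨z, hz, rfl⟩ | ⟨t, ht, rfl⟩) | ⟨z, hz, rfl⟩)
    · exact hBside δ z hz
    · exact Or.inl (hUinv t x hxU)
    · exact hBside (-δ) z hz

open Topology in
/-- If near `p` every point outside `U` lies on an embedded orbit arc through `p`, then `U`
accumulates at `p`: otherwise the arc would be a neighbourhood of `p`, but a punctured ball in `ℝ³`
is connected and a punctured arc is not. -/
theorem mem_closure_union_of_local_arc {M : Type*} [TopologicalSpace M] [T2Space M]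
    [CompactSpace M] [ChartedSpace (EuclideanSpace ℝ (Fin 3)) M] (φ : Flow ℝ M) {U : Set M}
    {p : M} {ε : ℝ} (hε : 0 < ε) (hinj : InjOn (fun t => φ t p) (Icc (-ε) ε))
    (hloc : ∀ᶠ x in 𝓝 p, x ∉ U → ∃ s ∈ Icc (-ε) ε, φ s p = x) : p ∈ closure U := by
  by_contra hcon
  obtain ⟨u, hu⟩ := exists_time_function φ hinj
  obtain ⟨e, he, he0, heV⟩ := exists_ball_chart p
    (inter_mem (isClosed_closure.isOpen_compl.mem_nhds hcon) hloc)
  have hcont : Continuous fun t => φ t p := φ.continuous continuous_id continuous_const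
  have hD : ∀ᶠ t in 𝓝 (0 : ℝ), φ t p ∈ range e := by
    refine hcont.continuousAt.preimage_mem_nhds ?_
    rw [φ.map_zero_apply]
    exact he.isOpen_range.mem_nhds ⟨0, he0⟩
  obtain ⟨r, hr, hrD⟩ := Metric.eventually_nhds_iff.1 hD
  obtain ⟨δ, hδ, hδε⟩ := exists_between (lt_min hr hε)
  rw [lt_min_iff] at hδε
  obtain ⟨za, hza⟩ := hrD (y := δ) (by simpa [abs_of_pos hδ] using hδε.1)
  obtain ⟨zb, hzb⟩ := hrD (y := -δ) (by simpa [abs_of_pos hδ] using hδε.1)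
  have hua : u (e za) = δ := by rw [hza, hu]; constructor <;> linarith
  have hub : u (e zb) = -δ := by rw [hzb, hu]; constructor <;> linarith
  have hup : u (e 0) = 0 := by
    have := hu 0 ⟨by linarith, hε.le⟩
    rwa [φ.map_zero_apply, ← he0] at this
  have hconn : IsPreconnected ({0}ᶜ : Set (EuclideanSpace ℝ (Fin 3))) :=
    (isConnected_compl_singleton_of_one_lt_rank (by
      rw [← Module.finrank_eq_rank, finrank_euclideanSpace_fin]
      norm_num) 0).isPreconnected
  obtain ⟨z, hz, hz0⟩ := hconn.intermediate_value (f := fun z => u (e z))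
    (a := zb) (b := za) (by rintro rfl; linarith) (by rintro rfl; linarith)
    (u.continuous.comp he.continuous).continuousOn
    (show (0 : ℝ) ∈ Icc _ _ by constructor <;> simp only [hua, hub] <;> linarith)
  obtain ⟨hz1, hz2⟩ := heV ⟨z, rfl⟩
  obtain ⟨s, hs, hsz⟩ := hz2 fun h => hz1 (subset_closure h)
  have hs0 : s = 0 := by
    rw [← hu s hs, hsz]; exact hz0
  rw [hs0, φ.map_zero_apply, ← he0] at hsz
  exact hz (he.injective hsz.symm)

open Topology in
/-- Two disjoint open invariant sets whose complement is, near `p`, an orbit arc through `p` cannot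
both accumulate at `p`. The winding of `u + i d` around the arc would give a continuous function
without logarithm on a punctured ball. -/
theorem not_mem_both_closures {M : Type*} [TopologicalSpace M] [T2Space M]
    [CompactSpace M] [ChartedSpace (EuclideanSpace ℝ (Fin 3)) M] (φ : Flow ℝ M) {U W : Set M}
    (hU : IsOpen U) (hW : IsOpen W) (hUW : Disjoint U W)
    (hUinv : ∀ t, ∀ x ∈ U, φ t x ∈ U) (hWinv : ∀ t, ∀ x ∈ W, φ t x ∈ W)
    {p : M} (hpU : p ∉ U) (hpW : p ∉ W) {ε : ℝ} (hε : 0 < ε)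
    (hinj : InjOn (fun t => φ t p) (Icc (-ε) ε))
    (hloc : ∀ η, 0 < η → η ≤ ε →
      ∀ᶠ x in 𝓝 p, x ∉ U ∪ W → ∃ s ∈ Icc (-η) η, φ s p = x)
    (hclU : p ∈ closure U) (hclW : p ∈ closure W) : False := by
  have horb : ∀ V : Set M, (∀ t, ∀ x ∈ V, φ t x ∈ V) → p ∉ V → ∀ t, φ t p ∉ V := by
    intro V hV hp t ht
    apply hp
    have := hV (-t) _ ht
    rwa [← φ.map_add, neg_add_cancel, φ.map_zero_apply] at this
  have horbU := horb U hUinv hpU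
  have horbW := horb W hWinv hpW
  obtain ⟨u, hu⟩ := exists_time_function φ hinj
  have hup : u p = 0 := by
    have := hu 0 ⟨by linarith, hε.le⟩
    rwa [φ.map_zero_apply] at this
  obtain ⟨e, he, he0, heV⟩ := exists_ball_chart p (hloc ε hε le_rfl)
  have hDnhds : range e ∈ 𝓝 p := he.isOpen_range.mem_nhds ⟨0, he0⟩
  have hp0 : ∀ z, e z = p → z = 0 := fun z hz => he.injective (hz.trans he0.symm)
  obtain ⟨d, hd, hdU, hdW, hd0⟩ := exists_signed_dist (hU.preimage he.continuous)
    (hW.preimage he.continuous) (hUW.preimage e)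
    ⟨0, by rintro (h | h) <;> rw [mem_preimage, he0] at h; exacts [hpU h, hpW h]⟩
  have hdL : ∀ z, e z ∉ U → e z ∉ W → d z = 0 := fun z h1 h2 => hd0 z fun h => h.elim h1 h2
  obtain ⟨G, hG, hGe⟩ := exists_log_compl_zero
    (F := fun z => ((u (e z) : ℝ) : ℂ) + ((d z : ℝ) : ℂ) * Complex.I)
    (by
      have := he.continuous
      fun_prop)
    (by
      intro z hz hF
      rw [← Complex.mk_eq_add_mul_I] at hF
      have hu0 : u (e z) = 0 := congrArg Complex.re hF
      have hdz : d z = 0 := congrArg Complex.im hF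
      have hzL : e z ∉ U ∪ W := by
        rintro (h | h)
        · exact (hdU z h).ne' hdz
        · exact (hdW z h).ne hdz
      obtain ⟨s, hs, hsz⟩ := heV ⟨z, rfl⟩ hzL
      have hs0 : s = 0 := by rw [← hu s hs, hsz, hu0]
      rw [hs0, φ.map_zero_apply] at hsz
      exact hz (hp0 z hsz.symm))
  simp only [← Complex.mk_eq_add_mul_I] at hGe
  have hcont : Continuous fun t => φ t p := φ.continuous continuous_id continuous_const
  have hnear : ∀ V ∈ 𝓝 p, ∃ η, 0 < η ∧ η ≤ ε ∧ ∀ t ∈ Icc (-η) η, φ t p ∈ V := by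
    intro V hV
    have hD : ∀ᶠ t in 𝓝 (0 : ℝ), φ t p ∈ V :=
      hcont.continuousAt.preimage_mem_nhds (by rwa [φ.map_zero_apply])
    obtain ⟨r, hr, hrD⟩ := Metric.eventually_nhds_iff.1 hD
    obtain ⟨η, hη, hηε⟩ := exists_between (lt_min hr hε)
    rw [lt_min_iff] at hηε
    refine ⟨η, hη, hηε.2.le, fun t ht => hrD ?_⟩
    rw [Real.dist_eq, sub_zero]
    exact (abs_le.2 ht).trans_lt hηε.1
  obtain ⟨δ, hδ, hδε, hδD⟩ := hnear _ hDnhds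
  have hδm : δ ∈ Icc (-δ) δ := ⟨by linarith, le_rfl⟩
  have hδm' : -δ ∈ Icc (-δ) δ := ⟨le_rfl, by linarith⟩
  have hua : u (φ δ p) = δ := hu δ ⟨by linarith, hδε⟩
  have hub : u (φ (-δ) p) = -δ := hu (-δ) ⟨by linarith, by linarith⟩
  have htube : ∀ᶠ x in 𝓝 p, ∀ t ∈ Icc (-δ) δ, φ t x ∈ range e := by
    refine isCompact_Icc.eventually_forall_of_forall_eventually fun t ht => ?_
    have : Continuous fun y : M × ℝ => φ y.2 y.1 := φ.continuous continuous_snd continuous_fst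
    exact this.continuousAt.preimage_mem_nhds (he.isOpen_range.mem_nhds (hδD t ht))
  have hpos : ∀ᶠ x in 𝓝 p, 0 < u (φ δ x) :=
    (u.continuous.comp (φ.continuous continuous_const continuous_id)).continuousAt.eventually
      (lt_mem_nhds (show (0 : ℝ) < u (φ δ p) by rw [hua]; exact hδ))
  have hneg : ∀ᶠ x in 𝓝 p, u (φ (-δ) x) < 0 :=
    (u.continuous.comp (φ.continuous continuous_const continuous_id)).continuousAt.eventually
      (gt_mem_nhds (show u (φ (-δ) p) < 0 by rw [hub]; linarith))
  have hgood := htube.and (hpos.and hneg)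
  -- `N` is a small ball together with an orbit arc `A`, so that `N` and its part `A` outside
  -- `U ∪ W` are both connected.
  obtain ⟨η, hη, hηε, hηN⟩ := hnear _ hgood
  set A : Set M := (fun t => φ t p) '' Icc (-η) η with hAdef
  have hA : IsPreconnected A := isPreconnected_Icc.image _ hcont.continuousOn
  have hpA : p ∈ A := ⟨0, ⟨by linarith, hη.le⟩, φ.map_zero_apply p⟩
  obtain ⟨r, hr, hball⟩ := Metric.mem_nhds_iff.1
    (he.continuous.continuousAt.preimage_mem_nhds (x := 0) (by
      rw [he0]; exact inter_mem hgood (hloc η hη hηε)))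
  set N : Set M := e '' Metric.ball 0 r ∪ A with hNdef
  have hball0 : p ∈ e '' Metric.ball 0 r := ⟨0, Metric.mem_ball_self hr, he0⟩
  have hN : IsPreconnected N :=
    IsPreconnected.union p hball0 hpA
      ((convex_ball _ _).isPreconnected.image _ he.continuous.continuousOn) hA
  have hNnhds : N ∈ 𝓝 p :=
    mem_of_superset ((he.isOpenMap _ Metric.isOpen_ball).mem_nhds hball0) subset_union_left
  have hNgood : ∀ x ∈ N, (∀ t ∈ Icc (-δ) δ, φ t x ∈ range e) ∧ 0 < u (φ δ x) ∧
      u (φ (-δ) x) < 0 := by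
    rintro _ (⟨z, hz, rfl⟩ | ⟨t, ht, rfl⟩)
    · exact (hball hz).1
    · exact hηN t ht
  have hNA : N ⊆ A ∪ (U ∪ W) := by
    rintro x (⟨z, hz, rfl⟩ | h)
    · by_cases hx : e z ∈ U ∪ W
      · exact Or.inr hx
      · exact Or.inl ((hball hz).2 hx)
    · exact Or.inl h
  have hAdisj : ∀ V : Set M, (∀ t, φ t p ∉ V) → Disjoint A V := by
    intro V hV
    rw [disjoint_left]
    rintro _ ⟨t, -, rfl⟩
    exact hV t
  have hp1 : ∀ x ∈ N, φ δ x ≠ p := fun x hx h => by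
    have := (hNgood x hx).2.1
    rw [h, hup] at this
    exact this.false
  have hp2 : ∀ x ∈ N, φ (-δ) x ≠ p := fun x hx h => by
    have := (hNgood x hx).2.2
    rw [h, hup] at this
    exact this.false
  have hmeet : ∀ V : Set M, p ∈ closure V → (N ∩ V).Nonempty := fun V hV =>
    mem_closure_iff_nhds.1 hV N hNnhds
  obtain ⟨za, hza⟩ := hδD δ hδm
  obtain ⟨zb, hzb⟩ := hδD (-δ) hδm'
  have hda : d za = 0 := hdL za (hza ▸ horbU δ) (hza ▸ horbW δ)
  have hdb : d zb = 0 := hdL zb (hzb ▸ horbU (-δ)) (hzb ▸ horbW (-δ))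
  have hva : 0 < u (e za) := by rw [hza, hua]; exact hδ
  have hvb : u (e zb) < 0 := by rw [hzb, hub]; linarith
  have horbA : ∀ z, (∃ a ∈ A, ∃ t : ℝ, φ t a = e z) → d z = 0 := by
    rintro z ⟨_, ⟨s, -, rfl⟩, t, h⟩
    have h' : φ (t + s) p = e z := by rw [φ.map_add]; exact h
    exact hdL z (h' ▸ horbU _) (h' ▸ horbW _)
  obtain ⟨C, hC, hCD, hpC, haC, hbC, hCs⟩ := exists_side_connection φ (D := range e) hδ.le hU hW
    hUW hUinv hN hA subset_union_right hpA hNA (hAdisj U horbU) (fun x hx => (hNgood x hx).1)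
    hp1 hp2 (hmeet U hclU)
  obtain ⟨C', hC', hCD', hpC', haC', hbC', hCs'⟩ := exists_side_connection φ (D := range e) hδ.le
    hW hU hUW.symm hWinv hN hA subset_union_right hpA (by rwa [union_comm W])
    (hAdisj W horbW) (fun x hx => (hNgood x hx).1) hp1 hp2 (hmeet W hclW)
  have hne : ∀ C : Set M, p ∉ C → ∀ z ∈ e ⁻¹' C, z ≠ 0 := by
    rintro C hpC z hz rfl
    rw [mem_preimage, he0] at hz
    exact hpC hz
  have t1 := half_turn (hC.preimage_of_isOpenMap he.injective he.isOpenMap hCD)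
    (hG.mono (hne C hpC)) (v := fun z => u (e z)) (d := d) (fun z hz => hGe z (hne C hpC z hz))
    (fun z hz => by
      rcases hCs _ hz with h | h
      · exact (hdU z h).le
      · exact (horbA z h).ge)
    (a := za) (b := zb) (by rwa [mem_preimage, hza]) (by rwa [mem_preimage, hzb]) hda hdb hva hvb
  -- On the side of `W` the values of `u + i d` lie in the lower half plane, so conjugate.
  have t2 := half_turn (hC'.preimage_of_isOpenMap he.injective he.isOpenMap hCD')
    (G := fun z => (starRingEnd ℂ) (G z))
    (Complex.continuous_conj.comp_continuousOn (hG.mono (hne C' hpC')))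
    (v := fun z => u (e z)) (d := fun z => -d z)
    (fun z hz => by
      rw [Complex.exp_conj, hGe z (hne C' hpC' z hz)]
      rfl)
    (fun z hz => by
      rcases hCs' _ hz with h | h
      · exact neg_nonneg.2 (hdW z h).le
      · simp [horbA z h])
    (a := za) (b := zb) (by rwa [mem_preimage, hza]) (by rwa [mem_preimage, hzb])
    (by simp [hda]) (by simp [hdb]) hva hvb
  simp only [Complex.conj_im] at t2
  linarith [Real.pi_pos]

/-! ### ω-limit sets and the conclusion -/

theorem omegaLimit_subset_of_isClosed_invariant {M : Type*} [TopologicalSpace M] (φ : Flow ℝ M)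
    {S : Set M} (hS : IsClosed S) (hinv : ∀ t, ∀ x ∈ S, φ t x ∈ S) {x : M} (hx : x ∈ S) :
    omegaLimit atTop (fun t : ℝ => fun x => φ t x) {x} ⊆ S := by
  refine (omegaLimit_subset_closure_image2 _ _ _ univ_mem).trans (closure_minimal ?_ hS)
  rintro _ ⟨t, -, y, hy, rfl⟩
  rw [mem_singleton_iff.1 hy]
  exact hinv t x hx

theorem omegaLimit_flow {M : Type*} [TopologicalSpace M] (φ : Flow ℝ M) (t : ℝ) (x : M) :
    omegaLimit atTop (fun t : ℝ => fun x => φ t x) {φ t x} ⊆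
      omegaLimit atTop (fun t : ℝ => fun x => φ t x) {x} := by
  have := φ.omegaLimit_image_subset atTop {x} t (tendsto_atTop_add_const_right _ _ tendsto_id)
  rwa [image_singleton] at this

/-- The topological core of Proposition 1: for a continuous flow on a nonempty compact
connected Hausdorff topological 3-manifold whose dynamics outside finitely many
pairwise disjoint periodic (non-fixed) orbits `l i` is attracted to one of the
nonempty closed invariant pairwise disjoint sets `Λ j` with open basins,
there is only one set `Λ j`. -/
theorem unique_attractor
    {M : Type*} [TopologicalSpace M] [T2Space M] [CompactSpace M]
    [ConnectedSpace M] [Nonempty M]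
    [ChartedSpace (EuclideanSpace ℝ (Fin 3)) M]
    (φ : Flow ℝ M)
    (m q : ℕ) (hq : 1 ≤ q)
    (l : Fin m → Set M)
    (hl : ∀ i, ∃ y : M, (∃ T : ℝ, 0 < T ∧ φ T y = y) ∧ (∃ t : ℝ, φ t y ≠ y) ∧
      l i = Set.range fun t : ℝ => φ t y)
    (hl_disj : Pairwise fun i j => Disjoint (l i) (l j))
    (Λ : Fin q → Set M)
    (hΛ_ne : ∀ j, (Λ j).Nonempty)
    (hΛ_closed : ∀ j, IsClosed (Λ j))
    (hΛ_inv : ∀ j, ∀ t : ℝ, (fun x => φ t x) '' Λ j ⊆ Λ j)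
    (hΛ_disj : Pairwise fun j j' => Disjoint (Λ j) (Λ j'))
    (hΛl : ∀ j i, Disjoint (Λ j) (l i))
    (hω : ∀ x : M, (∀ i, x ∉ l i) →
      ∃ j, omegaLimit atTop (fun t : ℝ => fun x => φ t x) {x} ⊆ Λ j)
    (hbasin : ∀ j,
      IsOpen {x : M | omegaLimit atTop (fun t : ℝ => fun x => φ t x) {x} ⊆ Λ j}) :
    q = 1 := by
  by_contra hq1
  set B : Fin q → Set M := fun j =>
    {x : M | omegaLimit atTop (fun t : ℝ => fun x => φ t x) {x} ⊆ Λ j} with hB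
  have hBinv : ∀ j, ∀ t, ∀ x ∈ B j, φ t x ∈ B j := fun j t x hx =>
    (omegaLimit_flow φ t x).trans hx
  have hωne : ∀ x : M, (omegaLimit atTop (fun t : ℝ => fun x => φ t x) {x}).Nonempty := fun x =>
    nonempty_omegaLimit _ _ _ (singleton_nonempty x)
  have hBdisj : ∀ j j', j ≠ j' → Disjoint (B j) (B j') := by
    intro j j' hjj
    rw [disjoint_left]
    intro x hx hx'
    obtain ⟨y, hy⟩ := hωne x
    exact disjoint_left.1 (hΛ_disj hjj) (hx hy) (hx' hy)
  have hΛB : ∀ j, Λ j ⊆ B j := fun j x hx =>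
    omegaLimit_subset_of_isClosed_invariant φ (hΛ_closed j)
      (fun t y hy => hΛ_inv j t (mem_image_of_mem _ hy)) hx
  have hlorb : ∀ i, ∀ p ∈ l i, (∃ T : ℝ, 0 < T ∧ φ T p = p) ∧ (∃ t : ℝ, φ t p ≠ p) ∧
      l i = range fun t : ℝ => φ t p := by
    intro i p hp
    obtain ⟨y, ⟨T, hT, hTy⟩, ⟨s, hs⟩, hli⟩ := hl i
    rw [hli] at hp ⊢
    obtain ⟨t, rfl⟩ := hp
    refine ⟨⟨T, hT, ?_⟩, ⟨s, fun h => hs ?_⟩, ?_⟩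
    · change φ T (φ t y) = φ t y
      rw [← φ.map_add, add_comm, φ.map_add, hTy]
    · have h' : φ (-t) (φ s (φ t y)) = φ (-t) (φ t y) := congrArg (φ (-t)) h
      rwa [← φ.map_add, ← φ.map_add, ← φ.map_add, neg_add_cancel, φ.map_zero_apply,
        show -t + s + t = s by ring] at h'
    · ext z
      constructor
      · rintro ⟨a, rfl⟩
        refine ⟨a - t, ?_⟩
        change φ (a - t) (φ t y) = φ a y
        rw [← φ.map_add, sub_add_cancel]
      · rintro ⟨a, rfl⟩
        exact ⟨a + t, φ.map_add _ _ _⟩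
  have hlinv : ∀ i, ∀ t, ∀ x ∈ l i, φ t x ∈ l i := by
    intro i t x hx
    rw [(hlorb i x hx).2.2]
    exact ⟨t, rfl⟩
  have hlcl : ∀ i, IsClosed (l i) := by
    intro i
    obtain ⟨y, ⟨T, hT, hTy⟩, -, hli⟩ := hl i
    have hper : Function.Periodic (fun t : ℝ => φ t y) T := fun t => by
      change φ (t + T) y = φ t y
      rw [φ.map_add, hTy]
    rw [hli, ← hper.image_Icc hT 0]
    exact (isCompact_Icc.image (φ.continuous continuous_id continuous_const)).isClosed
  have hlB : ∀ i j, Disjoint (l i) (B j) := by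
    intro i j
    rw [disjoint_left]
    intro x hx hxB
    obtain ⟨y, hy⟩ := hωne x
    exact disjoint_left.1 (hΛl j i) (hxB hy)
      (omegaLimit_subset_of_isClosed_invariant φ (hlcl i) (hlinv i) hx hy)
  let j₀ : Fin q := ⟨0, by omega⟩
  let j₁ : Fin q := ⟨1, by omega⟩
  have hj : j₁ ≠ j₀ := by simp [j₀, j₁]
  set U := B j₀ with hUdef
  set W := ⋃ j ∈ ({j₀}ᶜ : Set (Fin q)), B j with hWdef
  have hU : IsOpen U := hbasin j₀
  have hW : IsOpen W := isOpen_biUnion fun j _ => hbasin j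
  have hUW : Disjoint U W := by
    rw [hWdef, disjoint_iUnion₂_right]
    exact fun j hj => hBdisj _ _ (Ne.symm hj)
  have hWinv : ∀ t, ∀ x ∈ W, φ t x ∈ W := by
    intro t x hx
    obtain ⟨j, hj, hx⟩ := mem_iUnion₂.1 hx
    exact mem_iUnion₂.2 ⟨j, hj, hBinv j t x hx⟩
  have hmemL : ∀ x, x ∉ U ∪ W → ∃ i, x ∈ l i := by
    intro x hx
    by_contra! hcon
    obtain ⟨j, hj⟩ := hω x hcon
    apply hx
    by_cases h : j = j₀
    · exact Or.inl (show x ∈ B j₀ by rw [← h]; exact hj)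
    · exact Or.inr (mem_iUnion₂.2 ⟨j, h, hj⟩)
  have hclosures : ∀ p, (p ∈ closure U ∨ p ∈ closure W) ∧ ¬ (p ∈ closure U ∧ p ∈ closure W) := by
    intro p
    by_cases hpU : p ∈ U
    · exact ⟨Or.inl (subset_closure hpU),
        fun h => disjoint_left.1 (hUW.closure_right hU) hpU h.2⟩
    by_cases hpW : p ∈ W
    · exact ⟨Or.inr (subset_closure hpW),
        fun h => disjoint_left.1 (hUW.closure_left hW) h.1 hpW⟩
    obtain ⟨i, hi⟩ := hmemL p fun h => h.elim hpU hpW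
    obtain ⟨hper, hnf, hli⟩ := hlorb i p hi
    obtain ⟨ε, hε, hinj, harc⟩ := exists_local_arc φ hper hnf
    have hother : ∀ᶠ x in nhds p, ∀ k, k ≠ i → x ∉ l k := by
      rw [eventually_all]
      intro k
      by_cases hk : k = i
      · simp [hk]
      · filter_upwards [(hlcl k).isOpen_compl.mem_nhds (disjoint_right.1 (hl_disj hk) hi)]
          with x hx _ using hx
    have hloc : ∀ η, 0 < η → η ≤ ε →
        ∀ᶠ x in nhds p, x ∉ U ∪ W → ∃ s ∈ Icc (-η) η, φ s p = x := by
      intro η hη hηε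
      filter_upwards [harc η hη hηε, hother] with x h1 h2 hx
      obtain ⟨k, hk⟩ := hmemL x hx
      by_cases hki : k = i
      · exact h1 (by rwa [hki, hli] at hk)
      · exact (h2 k hki hk).elim
    refine ⟨?_, fun h => not_mem_both_closures φ hU hW hUW (hBinv j₀) hWinv hpU hpW hε hinj hloc
      h.1 h.2⟩
    rw [← mem_union, ← closure_union]
    exact mem_closure_union_of_local_arc φ hε hinj (hloc ε hε le_rfl)
  have hcompl : (closure U)ᶜ = closure W := by
    ext p
    have := hclosures p
    simp only [mem_compl_iff]
    tauto
  have hclopen : IsClopen (closure U) :=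
    ⟨isClosed_closure, by rw [← isClosed_compl_iff, hcompl]; exact isClosed_closure⟩
  obtain ⟨a, ha⟩ := hΛ_ne j₀
  obtain ⟨b, hb⟩ := hΛ_ne j₁
  have huniv := hclopen.eq_univ ⟨a, subset_closure (hΛB j₀ ha)⟩
  refine (hclosures b).2 ⟨by rw [huniv]; trivial, subset_closure ?_⟩
  exact mem_iUnion₂.2 ⟨j₁, hj, hΛB j₁ hb⟩
end

section
/- Let p : X → Y be a continuous map, let ψ be a continuous flow on X and φ a continuous flow on Y with p(ψ(t, x)) = φ(t, p(x)) for all t ∈ ℝ and x ∈ X. Let y ∈ Y be a periodic point of φ, i.e., φ(T, y) = y for some T > 0, and assume the fiber p⁻¹(y) is a nonempty finite set. Then every x ∈ p⁻¹(y) is a periodic point of ψ; more precisely, there exists an integer k with 1 ≤ k ≤ card(p⁻¹(y)) such that ψ(kT, x) = x. -/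
/-!
The time-`T` map of `φ` fixes `y`, so all the points `ψ (n * T) x` lie in the fiber over `y`.
By the pigeonhole principle two of those with `0 ≤ n ≤ card (p ⁻¹' {y})` coincide; as `ψ` is
invertible, the difference of the two indices gives a period.
-/


/-- If `ψ` lifts `φ` through `p`, `y` is a periodic point of `φ` with period `T > 0`
and the fiber over `y` is finite and nonempty, then every point of the fiber is
periodic for `ψ` with period `k * T` for some `1 ≤ k ≤ card (p ⁻¹' {y})`. -/
theorem lift_of_periodic_is_periodic
    {X Y : Type*} [TopologicalSpace X] [TopologicalSpace Y]
    (p : X → Y) (hp : Continuous p)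
    (ψ : Flow ℝ X) (φ : Flow ℝ Y)
    (hsc : ∀ (t : ℝ) (x : X), p (ψ t x) = φ t (p x))
    (y : Y) (T : ℝ) (hT : 0 < T) (hper : φ T y = y)
    (hfin : (p ⁻¹' {y}).Finite) (hne : (p ⁻¹' {y}).Nonempty)
    (x : X) (hx : x ∈ p ⁻¹' {y}) :
    ∃ k : ℕ, 1 ≤ k ∧ k ≤ Nat.card (p ⁻¹' {y}) ∧ ψ ((k : ℝ) * T) x = x := by
  have hφ : ∀ n : ℕ, φ ((n : ℝ) * T) y = y := by
    intro n
    induction n with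
    | zero => simp
    | succ n ih =>
      rw [Nat.cast_succ, add_mul, one_mul, φ.map_add, hper, ih]
  have hmem : ∀ n : ℕ, ψ ((n : ℝ) * T) x ∈ p ⁻¹' {y} := by
    intro n
    have hxy : p x = y := hx
    change p (ψ ((n : ℝ) * T) x) = y
    rw [hsc, hxy, hφ]
  have key : ∀ a b : ℕ, a < b → b ≤ Nat.card (p ⁻¹' {y}) →
      ψ ((a : ℝ) * T) x = ψ ((b : ℝ) * T) x →
      ∃ k : ℕ, 1 ≤ k ∧ k ≤ Nat.card (p ⁻¹' {y}) ∧ ψ ((k : ℝ) * T) x = x := by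
    intro a b hab hb h
    refine ⟨b - a, by omega, by omega, ?_⟩
    have hsub : ((b - a : ℕ) : ℝ) * T = -((a : ℝ) * T) + (b : ℝ) * T := by
      rw [Nat.cast_sub hab.le]; ring
    rw [hsub, ψ.map_add, ← h, ← ψ.map_add, neg_add_cancel, ψ.map_zero_apply]
  have hcard : (p ⁻¹' {y}).ncard <
      ((Finset.range (Nat.card (p ⁻¹' {y}) + 1) : Finset ℕ) : Set ℕ).ncard := by
    rw [Set.ncard_coe_finset, Finset.card_range]
    exact Nat.lt_succ_self _
  obtain ⟨a, ha, b, hb, hab, h⟩ := Set.exists_ne_map_eq_of_ncard_lt_of_maps_to hcard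
    (f := fun n : ℕ => ψ ((n : ℝ) * T) x) (fun n _ => hmem n) hfin
  rw [Finset.mem_coe, Finset.mem_range] at ha hb
  rcases hab.lt_or_gt with hlt | hlt
  · exact key a b hlt (by omega) h
  · exact key b a hlt (by omega) h.symm
end
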